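/- arXiv:1407.7045 — 2 statements merged into one kernel-verified Lean document; each statement's English description precedes it below -/
import Mathlib

section
/- Let α₁, α₂, α₃ ∈ ℝ and η₁₂ = η₂₁, η₂₃ = η₃₂, η₁₃ = η₃₁ ∈ ℝ, and let U ⊆ ℝ³ be an open set of points f = (f₁,f₂,f₃) on which: 1 + α_i e^{2f_i} > 0 for each i; the quantities defined by cosh ℓ_ij = √((1+α_i e^{2f_i})(1+α_j e^{2f_j})) + η_ij e^{f_i+f_j} satisfy cosh ℓ_ij > 1, and the resulting positive lengths ℓ_ij satisfy the strict triangle inequalities; the values x_ij := (1/sinh ℓ_ij)·∂(cosh ℓ_ij)/∂f_i lie in (−1,1), and d_ij := artanh(x_ij) > 0; and the height factors T_ij := cosh d_ij (tanh d_ik − tanh d_ij cos γ_i)/sin γ_i are positive for all distinct i,j, where γ_i ∈ (0,π) is defined by the hyperbolic law of cosines cos γ_i = (cosh ℓ_ij cosh ℓ_ik − cosh ℓ_jk)/(sinh ℓ_ij sinh ℓ_ik). Then at every point of U, the 3×3 matrix N with entries N_ab = −√(1 + α_b e^{2f_b}) · ∂γ_a/∂f_b is symmetric and positive definite. -/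
noncomputable section

/-- `cosh ℓ_ij` for the discrete conformal structure with vertex weights `α` and edge
weights `η`: `cosh ℓ_ij = √((1+α_i e^{2f_i})(1+α_j e^{2f_j})) + η_ij e^{f_i+f_j}`. -/
def coshLen (α : Fin 3 → ℝ) (η : Fin 3 → Fin 3 → ℝ) (i j : Fin 3) (f : Fin 3 → ℝ) : ℝ :=
  Real.sqrt ((1 + α i * Real.exp (2 * f i)) * (1 + α j * Real.exp (2 * f j)))
    + η i j * Real.exp (f i + f j)

/-- The index complementary to `i` and `j` in `{0,1,2}` (for `i ≠ j`). -/
def other (i j : Fin 3) : Fin 3 := -(i + j)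

/-- Inverse hyperbolic cosine, giving the length `ℓ_ij` from `cosh ℓ_ij`. -/
def arcosh (x : ℝ) : ℝ := Real.log (x + Real.sqrt (x ^ 2 - 1))

/-- Inverse hyperbolic tangent. -/
def artanh (x : ℝ) : ℝ := Real.log ((1 + x) / (1 - x)) / 2

/-- The angle `γ_i` determined by the hyperbolic law of cosines
`cos γ_i = (cosh ℓ_ij cosh ℓ_ik − cosh ℓ_jk)/(sinh ℓ_ij sinh ℓ_ik)`,
using `sinh ℓ = √(cosh² ℓ − 1)`. -/
def cGamma (α : Fin 3 → ℝ) (η : Fin 3 → Fin 3 → ℝ) (i : Fin 3) (f : Fin 3 → ℝ) : ℝ :=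
  Real.arccos ((coshLen α η i (i+1) f * coshLen α η i (i+2) f
      - coshLen α η (i+1) (i+2) f) /
    (Real.sqrt (coshLen α η i (i+1) f ^ 2 - 1)
      * Real.sqrt (coshLen α η i (i+2) f ^ 2 - 1)))

/-- `x_ij = (∂(cosh ℓ_ij)/∂f_i)/sinh ℓ_ij`, which is `tanh d_ij`. -/
def xCoef (α : Fin 3 → ℝ) (η : Fin 3 → Fin 3 → ℝ) (i j : Fin 3) (f : Fin 3 → ℝ) : ℝ :=
  fderiv ℝ (coshLen α η i j) f (Pi.single i 1)
    / Real.sqrt (coshLen α η i j f ^ 2 - 1)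

/-- The partial edge length `d_ij = artanh x_ij`. -/
def dPart (α : Fin 3 → ℝ) (η : Fin 3 → Fin 3 → ℝ) (i j : Fin 3) (f : Fin 3 → ℝ) : ℝ :=
  artanh (xCoef α η i j f)

/-- The height factor `T_ij = cosh d_ij (tanh d_ik − tanh d_ij cos γ_i)/sin γ_i`. -/
def cT (α : Fin 3 → ℝ) (η : Fin 3 → Fin 3 → ℝ) (i j : Fin 3) (f : Fin 3 → ℝ) : ℝ :=
  Real.cosh (dPart α η i j f) * (Real.tanh (dPart α η i (other i j) f)
      - Real.tanh (dPart α η i j f) * Real.cos (cGamma α η i f))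
    / Real.sin (cGamma α η i f)

/-!
Write `s_i = √(1+α_i e^{2f_i})` and `c_ij = cosh ℓ_ij`. In the variables `u` the lengths satisfy
`∂c_ij/∂u_i = s_i c_ij - s_j`. Differentiating the law of cosines therefore gives
`∂γ_i/∂u_j = w_ij` for a weight that is symmetric in `i` and `j`, together with
`∂γ_i/∂u_i = -∑_{j ≠ i} c_ij w_ij`. The weight `w_ij` is a positive multiple of the height factor
`T_ij`; since `c_ij > 1`, the symmetric matrix `N` is strictly diagonally dominant with positive
diagonal, and Gershgorin's theorem makes its eigenvalues positive.
-/

open scoped ComplexOrder in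
theorem posDef_of_sum_row_lt_diag {𝕜 n : Type*} [RCLike 𝕜] [Fintype n] [DecidableEq n]
    {A : Matrix n n 𝕜} (hA : A.IsHermitian)
    (h : ∀ i, ∑ j ∈ Finset.univ.erase i, ‖A i j‖ < RCLike.re (A i i)) : A.PosDef := by
  refine hA.posDef_iff_eigenvalues_pos.mpr fun m => ?_
  have hspec : (hA.eigenvalues m : 𝕜) ∈ spectrum 𝕜 (Matrix.toLin' A) := by
    rw [Matrix.spectrum_toLin']
    exact (spectrum.algebraMap_mem_iff 𝕜).mpr (hA.eigenvalues_mem_spectrum_real m)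
  obtain ⟨i, hi⟩ := eigenvalue_mem_ball (Module.End.hasEigenvalue_iff_mem_spectrum.mpr hspec)
  rw [mem_closedBall_iff_norm'] at hi
  have hre := RCLike.re_le_norm (A i i - (hA.eigenvalues m : 𝕜))
  rw [map_sub, RCLike.ofReal_re] at hre
  linarith [h i]

theorem tanh_artanh {x : ℝ} (hx : x ∈ Set.Ioo (-1 : ℝ) 1) : Real.tanh (artanh x) = x := by
  have h : artanh x = Real.artanh x := by
    rw [Real.artanh_eq_half_log (Set.Ioo_subset_Icc_self hx), artanh]
    ring
  rw [h, Real.tanh_artanh hx]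

section HyperbolicTriangle

/-- The determinant of the symmetric `3 × 3` matrix with unit diagonal and off-diagonal entries
`a`, `b`, `c`. For the `cosh` of the side lengths of a hyperbolic triangle it is, up to sign, the
Gram determinant of the vertices in the hyperboloid model. -/
def gramDet (a b c : ℝ) : ℝ := 1 + 2 * a * b * c - a ^ 2 - b ^ 2 - c ^ 2

/-- The cosine of an angle of a hyperbolic triangle, where `a` and `b` are the `cosh` of the two
adjacent sides and `c` is the `cosh` of the opposite side. -/
def cosAngle (a b c : ℝ) : ℝ := (a * b - c) / (√(a ^ 2 - 1) * √(b ^ 2 - 1))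

theorem gramDet_left_comm (a b c : ℝ) : gramDet a b c = gramDet b a c := by
  unfold gramDet
  ring

theorem gramDet_right_comm (a b c : ℝ) : gramDet a b c = gramDet a c b := by
  unfold gramDet
  ring

theorem cosAngle_comm (a b c : ℝ) : cosAngle a b c = cosAngle b a c := by
  rw [cosAngle, cosAngle, mul_comm a, mul_comm (√_)]

variable {a b c : ℝ}

theorem sq_sub_one_pos (ha : 1 < a) : 0 < a ^ 2 - 1 :=
  sub_pos.mpr (one_lt_pow₀ ha two_ne_zero)

theorem one_sub_cosAngle_sq (ha : 1 < a) (hb : 1 < b) :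
    1 - cosAngle a b c ^ 2 = gramDet a b c / ((a ^ 2 - 1) * (b ^ 2 - 1)) := by
  have ha' := sq_sub_one_pos ha
  have hb' := sq_sub_one_pos hb
  rw [cosAngle, div_pow, mul_pow, Real.sq_sqrt ha'.le, Real.sq_sqrt hb'.le, gramDet]
  field_simp
  ring

theorem sqrt_one_sub_cosAngle_sq (ha : 1 < a) (hb : 1 < b) :
    √(1 - cosAngle a b c ^ 2) = √(gramDet a b c) / (√(a ^ 2 - 1) * √(b ^ 2 - 1)) := by
  have ha' := sq_sub_one_pos ha
  have hb' := sq_sub_one_pos hb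
  rw [one_sub_cosAngle_sq ha hb, Real.sqrt_div' _ (mul_pos ha' hb').le, Real.sqrt_mul ha'.le]

theorem abs_cosAngle_lt_one (ha : 1 < a) (hb : 1 < b) (hD : 0 < gramDet a b c) :
    |cosAngle a b c| < 1 := by
  rw [← sq_lt_one_iff_abs_lt_one, ← sub_pos, one_sub_cosAngle_sq ha hb]
  exact div_pos hD (mul_pos (sq_sub_one_pos ha) (sq_sub_one_pos hb))

variable {E : Type*} [NormedAddCommGroup E] [NormedSpace ℝ E] {A B C : E → ℝ}
  {A' B' C' : E →L[ℝ] ℝ} {x : E}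

theorem hasFDerivAt_cosAngle (hA : HasFDerivAt A A' x) (hB : HasFDerivAt B B' x)
    (hC : HasFDerivAt C C' x) (ha : 1 < A x) (hb : 1 < B x) :
    HasFDerivAt (fun y => cosAngle (A y) (B y) (C y))
      ((√(A x ^ 2 - 1) * √(B x ^ 2 - 1))⁻¹ •
        (((A x * C x - B x) / (A x ^ 2 - 1)) • A' + ((B x * C x - A x) / (B x ^ 2 - 1)) • B' - C'))
      x := by
  have ha' := sq_sub_one_pos ha
  have hb' := sq_sub_one_pos hb
  have hP := Real.sqrt_pos.mpr ha'
  have hQ := Real.sqrt_pos.mpr hb'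
  have hPsq := Real.sq_sqrt ha'.le
  have hQsq := Real.sq_sqrt hb'.le
  have hden := (((hA.pow 2).sub_const 1).sqrt ha'.ne').mul (((hB.pow 2).sub_const 1).sqrt hb'.ne')
  have hquot := ((hA.mul hB).sub hC).mul
    ((hasDerivAt_inv (mul_pos hP hQ).ne').comp_hasFDerivAt x hden)
  refine hquot.congr_fderiv ?_
  simp only [Pi.sub_apply, Pi.mul_apply, Function.comp_apply, nsmul_eq_mul, Nat.cast_ofNat,
    Nat.add_one_sub_one, pow_one]
  generalize √(A x ^ 2 - 1) = P at hP hPsq ⊢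
  generalize √(B x ^ 2 - 1) = Q at hQ hQsq ⊢
  rw [← hPsq, ← hQsq]
  match_scalars <;> field_simp
  · linear_combination A x * hQsq
  · linear_combination B x * hPsq

theorem hasFDerivAt_arccos_cosAngle (hA : HasFDerivAt A A' x) (hB : HasFDerivAt B B' x)
    (hC : HasFDerivAt C C' x) (ha : 1 < A x) (hb : 1 < B x)
    (hD : 0 < gramDet (A x) (B x) (C x)) :
    HasFDerivAt (fun y => Real.arccos (cosAngle (A y) (B y) (C y)))
      ((√(gramDet (A x) (B x) (C x)))⁻¹ •
        (C' - ((A x * C x - B x) / (A x ^ 2 - 1)) • A' - ((B x * C x - A x) / (B x ^ 2 - 1)) • B'))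
      x := by
  obtain ⟨hneg, hlt⟩ := abs_lt.mp (abs_cosAngle_lt_one ha hb hD)
  have hP := Real.sqrt_pos.mpr (sq_sub_one_pos ha)
  have hQ := Real.sqrt_pos.mpr (sq_sub_one_pos hb)
  refine ((Real.hasDerivAt_arccos hneg.ne' hlt.ne).comp_hasFDerivAt x
    (hasFDerivAt_cosAngle hA hB hC ha hb)).congr_fderiv ?_
  rw [sqrt_one_sub_cosAngle_sq ha hb]
  match_scalars <;> field_simp

end HyperbolicTriangle

section Triples

theorem other_comm (i j : Fin 3) : other i j = other j i := by
  rw [other, other, add_comm]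

theorem other_other (i j : Fin 3) : other i (other i j) = j := by
  simp only [other, neg_add_rev, add_neg_cancel_comm_assoc, neg_neg]

variable {i j : Fin 3}

theorem other_ne_left (h : i ≠ j) : other i j ≠ i := by
  revert i j
  decide

theorem other_ne_right (h : i ≠ j) : other i j ≠ j := by
  rw [other_comm]
  exact other_ne_left h.symm

theorem univ_erase_eq_pair_other (h : i ≠ j) : Finset.univ.erase i = {j, other i j} := by
  revert i j
  decide

theorem eq_succ_or_other_eq_succ (h : i ≠ j) :
    j = i + 1 ∧ other i j = i + 2 ∨ j = i + 2 ∧ other i j = i + 1 := by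
  revert i j
  decide

end Triples

section ConformalStructure

/-- The factor `s_i = √(1+α_i e^{2f_i})`, which equals `∂f_i/∂u_i`. -/
def vertexScale (α : Fin 3 → ℝ) (i : Fin 3) (f : Fin 3 → ℝ) : ℝ :=
  √(1 + α i * Real.exp (2 * f i))

/-- The partial derivative `∂F/∂u_i = s_i ∂F/∂f_i`, for `F` given as a function of `f`. -/
def uPartial (α : Fin 3 → ℝ) (i : Fin 3) (F : (Fin 3 → ℝ) → ℝ) (f : Fin 3 → ℝ) : ℝ :=
  vertexScale α i f * fderiv ℝ F f (Pi.single i 1)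

/-- The weight `w_ij` of the edge `ij`, which turns out to be `∂γ_i/∂u_j`. With `k` the third
vertex, its denominator is `sinh² ℓ_ij` times the square root of the Gram determinant. -/
def edgeWeight (α : Fin 3 → ℝ) (η : Fin 3 → Fin 3 → ℝ) (i j : Fin 3) (f : Fin 3 → ℝ) : ℝ :=
  let k := other i j
  (vertexScale α i f * (coshLen α η i j f * coshLen α η j k f - coshLen α η i k f)
      + vertexScale α j f * (coshLen α η i j f * coshLen α η i k f - coshLen α η j k f)
      - vertexScale α k f * (coshLen α η i j f ^ 2 - 1)) /
    ((coshLen α η i j f ^ 2 - 1) *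
      √(gramDet (coshLen α η i j f) (coshLen α η i k f) (coshLen α η j k f)))

variable {α : Fin 3 → ℝ} {η : Fin 3 → Fin 3 → ℝ} {f : Fin 3 → ℝ} {i j k : Fin 3}

theorem coshLen_comm (hη : ∀ i j, η i j = η j i) (i j : Fin 3) :
    coshLen α η i j = coshLen α η j i := by
  funext f
  rw [coshLen, coshLen, hη i j, mul_comm (1 + α i * _), add_comm (f i)]

theorem edgeWeight_comm (hη : ∀ i j, η i j = η j i) (i j : Fin 3) :
    edgeWeight α η i j f = edgeWeight α η j i f := by
  simp only [edgeWeight, other_comm j i, coshLen_comm hη j i,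
    gramDet_right_comm _ (coshLen α η j _ f)]
  rw [add_comm (vertexScale α i f * _)]

theorem vertexScale_pos (hi : 0 < 1 + α i * Real.exp (2 * f i)) : 0 < vertexScale α i f :=
  Real.sqrt_pos.mpr hi

theorem hasFDerivAt_vertexScale (hi : 0 < 1 + α i * Real.exp (2 * f i)) :
    HasFDerivAt (vertexScale α i)
      ((vertexScale α i f - (vertexScale α i f)⁻¹) •
        ContinuousLinearMap.proj (R := ℝ) (φ := fun _ : Fin 3 => ℝ) i) f := by
  have hs := (vertexScale_pos hi).ne'
  have hsq : vertexScale α i f ^ 2 = 1 + α i * Real.exp (2 * f i) := Real.sq_sqrt hi.le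
  have hexp := (((hasFDerivAt_apply (𝕜 := ℝ) i f).const_mul 2).exp.const_mul (α i)).const_add 1
  refine (hexp.sqrt hi.ne').congr_fderiv ?_
  have hαe : α i * Real.exp (2 * f i) = vertexScale α i f ^ 2 - 1 := by rw [hsq]; ring
  change (1 / (2 * vertexScale α i f)) • _ = _
  match_scalars
  field_simp
  linear_combination hαe

theorem coshLen_eq (hi : 0 ≤ 1 + α i * Real.exp (2 * f i)) :
    coshLen α η i j f =
      vertexScale α i f * vertexScale α j f + η i j * Real.exp (f i + f j) := by
  rw [coshLen, Real.sqrt_mul hi]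
  rfl

theorem hasFDerivAt_coshLen (hi : 0 < 1 + α i * Real.exp (2 * f i))
    (hj : 0 < 1 + α j * Real.exp (2 * f j)) :
    HasFDerivAt (coshLen α η i j)
      ((coshLen α η i j f - vertexScale α j f / vertexScale α i f) •
          ContinuousLinearMap.proj (R := ℝ) (φ := fun _ : Fin 3 => ℝ) i
        + (coshLen α η i j f - vertexScale α i f / vertexScale α j f) •
          ContinuousLinearMap.proj (R := ℝ) (φ := fun _ : Fin 3 => ℝ) j) f := by
  have hexp := ((hasFDerivAt_apply (𝕜 := ℝ) i f).add (hasFDerivAt_apply j f)).exp.const_mul (η i j)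
  have hsum := ((hasFDerivAt_vertexScale hi).mul (hasFDerivAt_vertexScale hj)).add hexp
  have hcont : Continuous fun g : Fin 3 → ℝ => 1 + α i * Real.exp (2 * g i) := by fun_prop
  have heq := (hcont.continuousAt.eventually_const_lt hi).mono
    fun g hg => coshLen_eq (η := η) (j := j) hg.le
  refine (hsum.congr_of_eventuallyEq heq).congr_fderiv ?_
  rw [coshLen_eq hi.le, Pi.add_apply]
  module

theorem uPartial_coshLen_left (hi : 0 < 1 + α i * Real.exp (2 * f i))
    (hj : 0 < 1 + α j * Real.exp (2 * f j)) (hij : i ≠ j) :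
    uPartial α i (coshLen α η i j) f
      = vertexScale α i f * coshLen α η i j f - vertexScale α j f := by
  have hs := (vertexScale_pos hi).ne'
  rw [uPartial, (hasFDerivAt_coshLen hi hj).fderiv]
  simp only [add_apply, smul_apply, ContinuousLinearMap.proj_apply, Pi.single_eq_same,
    Pi.single_eq_of_ne' hij, smul_eq_mul, mul_one, mul_zero, add_zero]
  field_simp

theorem uPartial_coshLen_of_ne (hi : 0 < 1 + α i * Real.exp (2 * f i))
    (hj : 0 < 1 + α j * Real.exp (2 * f j)) (hik : i ≠ k) (hjk : j ≠ k) :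
    uPartial α k (coshLen α η i j) f = 0 := by
  rw [uPartial, (hasFDerivAt_coshLen hi hj).fderiv]
  simp [hik, hjk]

theorem xCoef_eq (hi : 0 < 1 + α i * Real.exp (2 * f i))
    (hj : 0 < 1 + α j * Real.exp (2 * f j)) (hij : i ≠ j) :
    xCoef α η i j f = (vertexScale α i f * coshLen α η i j f - vertexScale α j f) /
      (vertexScale α i f * √(coshLen α η i j f ^ 2 - 1)) := by
  rw [← uPartial_coshLen_left hi hj hij, uPartial,
    mul_div_mul_left _ _ (vertexScale_pos hi).ne', xCoef]

theorem cGamma_eq (hη : ∀ i j, η i j = η j i) (hij : i ≠ j) (hk : other i j = k) :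
    cGamma α η i = fun g =>
      Real.arccos (cosAngle (coshLen α η i j g) (coshLen α η i k g) (coshLen α η j k g)) := by
  funext g
  rw [← hk]
  rcases eq_succ_or_other_eq_succ hij with ⟨hj, hk'⟩ | ⟨hj, hk'⟩ <;> rw [hk', hj]
  · rfl
  · rw [cosAngle_comm, coshLen_comm hη (i + 2)]
    rfl

theorem uPartial_cGamma (hη : ∀ i j, η i j = η j i)
    (hα : ∀ i, 0 < 1 + α i * Real.exp (2 * f i)) (hcosh : ∀ i j, i ≠ j → 1 < coshLen α η i j f)
    (hij : i ≠ j) (hk : other i j = k)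
    (hD : 0 < gramDet (coshLen α η i j f) (coshLen α η i k f) (coshLen α η j k f)) (b : Fin 3) :
    uPartial α b (cGamma α η i) f =
      (uPartial α b (coshLen α η j k) f
        - (coshLen α η i j f * coshLen α η j k f - coshLen α η i k f) /
            (coshLen α η i j f ^ 2 - 1) * uPartial α b (coshLen α η i j) f
        - (coshLen α η i k f * coshLen α η j k f - coshLen α η i j f) /
            (coshLen α η i k f ^ 2 - 1) * uPartial α b (coshLen α η i k) f) /
      √(gramDet (coshLen α η i j f) (coshLen α η i k f) (coshLen α η j k f)) := by
  have hik : i ≠ k := hk ▸ (other_ne_left hij).symm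
  have hdiff : ∀ a b : Fin 3, HasFDerivAt (coshLen α η a b) (fderiv ℝ (coshLen α η a b) f) f :=
    fun a b => (hasFDerivAt_coshLen (hα a) (hα b)).differentiableAt.hasFDerivAt
  rw [uPartial, cGamma_eq hη hij hk, (hasFDerivAt_arccos_cosAngle (hdiff i j) (hdiff i k)
    (hdiff j k) (hcosh i j hij) (hcosh i k hik) hD).fderiv]
  simp only [uPartial, smul_apply, sub_apply, smul_eq_mul]
  ring

theorem uPartial_cGamma_of_ne (hη : ∀ i j, η i j = η j i)
    (hα : ∀ i, 0 < 1 + α i * Real.exp (2 * f i)) (hcosh : ∀ i j, i ≠ j → 1 < coshLen α η i j f)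
    (hij : i ≠ j) (hk : other i j = k)
    (hD : 0 < gramDet (coshLen α η i j f) (coshLen α η i k f) (coshLen α η j k f)) :
    uPartial α j (cGamma α η i) f = edgeWeight α η i j f := by
  have hjk : j ≠ k := hk ▸ (other_ne_right hij).symm
  have hA := sq_sub_one_pos (hcosh i j hij)
  rw [uPartial_cGamma hη hα hcosh hij hk hD, uPartial_coshLen_left (hα _) (hα _) hjk,
    coshLen_comm hη i j, uPartial_coshLen_left (hα _) (hα _) hij.symm,
    uPartial_coshLen_of_ne (hα _) (hα _) hij hjk.symm, edgeWeight, hk, coshLen_comm hη j i]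
  field_simp
  ring

theorem uPartial_cGamma_self (hη : ∀ i j, η i j = η j i)
    (hα : ∀ i, 0 < 1 + α i * Real.exp (2 * f i)) (hcosh : ∀ i j, i ≠ j → 1 < coshLen α η i j f)
    (hij : i ≠ j) (hk : other i j = k)
    (hD : 0 < gramDet (coshLen α η i j f) (coshLen α η i k f) (coshLen α η j k f)) :
    uPartial α i (cGamma α η i) f =
      -(coshLen α η i j f * edgeWeight α η i j f + coshLen α η i k f * edgeWeight α η i k f) := by
  have hik : i ≠ k := hk ▸ (other_ne_left hij).symm
  have hA := sq_sub_one_pos (hcosh i j hij)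
  have hB := sq_sub_one_pos (hcosh i k hik)
  have hki : other i k = j := hk ▸ other_other i j
  rw [uPartial_cGamma hη hα hcosh hij hk hD, uPartial_coshLen_left (hα _) (hα _) hij,
    uPartial_coshLen_left (hα _) (hα _) hik,
    uPartial_coshLen_of_ne (hα _) (hα _) hij.symm hik.symm, edgeWeight, edgeWeight, hk, hki,
    coshLen_comm hη k j, gramDet_left_comm (coshLen α η i k f)]
  field_simp
  ring

theorem gramDet_pos_of_cT_pos (hη : ∀ i j, η i j = η j i)
    (hcosh : ∀ i j, i ≠ j → 1 < coshLen α η i j f) (hij : i ≠ j) (hk : other i j = k)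
    (hT : 0 < cT α η i j f) :
    0 < gramDet (coshLen α η i j f) (coshLen α η i k f) (coshLen α η j k f) := by
  have hik : i ≠ k := hk ▸ (other_ne_left hij).symm
  contrapose! hT
  -- A nonpositive determinant gives `sin γ_i = 0`, and then `T_ij = 0` because `x / 0 = 0`.
  rw [cT, cGamma_eq hη hij hk, Real.sin_arccos,
    sqrt_one_sub_cosAngle_sq (hcosh i j hij) (hcosh i k hik), Real.sqrt_eq_zero_of_nonpos hT,
    zero_div, div_zero]

theorem cT_eq (hη : ∀ i j, η i j = η j i) (hα : ∀ i, 0 < 1 + α i * Real.exp (2 * f i))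
    (hcosh : ∀ i j, i ≠ j → 1 < coshLen α η i j f)
    (hx : ∀ i j, i ≠ j → xCoef α η i j f ∈ Set.Ioo (-1 : ℝ) 1) (hij : i ≠ j) (hk : other i j = k)
    (hD : 0 < gramDet (coshLen α η i j f) (coshLen α η i k f) (coshLen α η j k f)) :
    cT α η i j f = Real.cosh (dPart α η i j f) * √(coshLen α η i j f ^ 2 - 1) /
      vertexScale α i f * edgeWeight α η i j f := by
  have hik : i ≠ k := hk ▸ (other_ne_left hij).symm
  have hA := sq_sub_one_pos (hcosh i j hij)
  have hB := sq_sub_one_pos (hcosh i k hik)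
  have hP := Real.sqrt_pos.mpr hA
  have hPsq := Real.sq_sqrt hA.le
  have hs := vertexScale_pos (hα i)
  have hcos := abs_le.mp (abs_cosAngle_lt_one (hcosh i j hij) (hcosh i k hik) hD).le
  have htanh : ∀ l, i ≠ l → Real.tanh (dPart α η i l f) = xCoef α η i l f :=
    fun l hl => tanh_artanh (hx i l hl)
  rw [cT, hk, htanh j hij, htanh k hik, cGamma_eq hη hij hk, Real.cos_arccos hcos.1 hcos.2,
    Real.sin_arccos, sqrt_one_sub_cosAngle_sq (hcosh i j hij) (hcosh i k hik),
    xCoef_eq (hα _) (hα _) hij, xCoef_eq (hα _) (hα _) hik, cosAngle, edgeWeight, hk]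
  generalize √(coshLen α η i j f ^ 2 - 1) = P at hP hPsq ⊢
  rw [← hPsq]
  field_simp
  linear_combination vertexScale α i f * coshLen α η i k f * hPsq

theorem edgeWeight_pos (hη : ∀ i j, η i j = η j i)
    (hα : ∀ i, 0 < 1 + α i * Real.exp (2 * f i)) (hcosh : ∀ i j, i ≠ j → 1 < coshLen α η i j f)
    (hx : ∀ i j, i ≠ j → xCoef α η i j f ∈ Set.Ioo (-1 : ℝ) 1) (hij : i ≠ j)
    (hT : 0 < cT α η i j f) : 0 < edgeWeight α η i j f := by
  have hfactor : 0 < Real.cosh (dPart α η i j f) * √(coshLen α η i j f ^ 2 - 1) /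
      vertexScale α i f :=
    div_pos (mul_pos (Real.cosh_pos _) (Real.sqrt_pos.mpr (sq_sub_one_pos (hcosh i j hij))))
      (vertexScale_pos (hα i))
  rw [cT_eq hη hα hcosh hx hij rfl (gramDet_pos_of_cT_pos hη hcosh hij rfl hT)] at hT
  exact pos_of_mul_pos_right hT hfactor.le

end ConformalStructure

theorem hyperbolic_conformal_convexity_general
    (α : Fin 3 → ℝ) (η : Fin 3 → Fin 3 → ℝ) (hη : ∀ i j : Fin 3, η i j = η j i)
    (f : Fin 3 → ℝ) (hα : ∀ i : Fin 3, 0 < 1 + α i * Real.exp (2 * f i))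
    (hcosh : ∀ i j : Fin 3, i ≠ j → 1 < coshLen α η i j f)
    (hx : ∀ i j : Fin 3, i ≠ j → xCoef α η i j f ∈ Set.Ioo (-1 : ℝ) 1)
    (hT : ∀ i j : Fin 3, i ≠ j → 0 < cT α η i j f) :
    (Matrix.of fun a b : Fin 3 => -uPartial α b (cGamma α η a) f).IsSymm ∧
      (Matrix.of fun a b : Fin 3 => -uPartial α b (cGamma α η a) f).PosDef := by
  have hD i j (hij : i ≠ j) := gramDet_pos_of_cT_pos hη hcosh hij rfl (hT i j hij)
  have hne i j (hij : i ≠ j) := uPartial_cGamma_of_ne hη hα hcosh hij rfl (hD i j hij)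
  have hw i j (hij : i ≠ j) := edgeWeight_pos hη hα hcosh hx hij (hT i j hij)
  have hsymm : (Matrix.of fun a b : Fin 3 => -uPartial α b (cGamma α η a) f).IsSymm := by
    ext a b
    rcases eq_or_ne a b with rfl | hab
    · rfl
    · simp only [Matrix.transpose_apply, Matrix.of_apply, hne a b hab, hne b a hab.symm,
        edgeWeight_comm hη a b]
  refine ⟨hsymm, posDef_of_sum_row_lt_diag (by rwa [Matrix.isHermitian_iff_isSymm]) fun i => ?_⟩
  obtain ⟨j, hij⟩ : ∃ j, i ≠ j := ⟨i + 1, by simp⟩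
  have hik := (other_ne_left hij).symm
  rw [univ_erase_eq_pair_other hij, Finset.sum_pair (other_ne_right hij).symm]
  simp only [Matrix.of_apply, norm_neg, hne i _ hij, hne i _ hik, Real.norm_eq_abs,
    abs_of_pos (hw i _ hij), abs_of_pos (hw i _ hik), RCLike.re_to_real,
    uPartial_cGamma_self hη hα hcosh hij rfl (hD i j hij), neg_neg]
  exact add_lt_add (lt_mul_of_one_lt_left (hw i j hij) (hcosh i j hij))
    (lt_mul_of_one_lt_left (hw i _ hik) (hcosh i _ hik))

/-- Theorem 1.4/5.5 (convexity, hyperbolic background): for the discrete conformal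
structure determined by `α` and `η`, with positive partial edge lengths and positive
height factors, the matrix `N_ab = −√(1+α_b e^{2f_b}) ∂γ_a/∂f_b` (the Hessian
`−∂γ_a/∂u_b` in the variables `u`) is symmetric and positive definite. -/
theorem hyperbolic_conformal_convexity
    (α : Fin 3 → ℝ) (η : Fin 3 → Fin 3 → ℝ) (hη : ∀ i j : Fin 3, η i j = η j i)
    (U : Set (Fin 3 → ℝ)) (hUopen : IsOpen U)
    (hα : ∀ f ∈ U, ∀ i : Fin 3, 0 < 1 + α i * Real.exp (2 * f i))
    (hcosh : ∀ f ∈ U, ∀ i j : Fin 3, i ≠ j → 1 < coshLen α η i j f)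
    (htri : ∀ f ∈ U, ∀ i j k : Fin 3, i ≠ j → j ≠ k → i ≠ k →
      arcosh (coshLen α η i j f)
        < arcosh (coshLen α η i k f) + arcosh (coshLen α η k j f))
    (hx : ∀ f ∈ U, ∀ i j : Fin 3, i ≠ j →
      xCoef α η i j f ∈ Set.Ioo (-1 : ℝ) 1 ∧ 0 < dPart α η i j f)
    (hT : ∀ f ∈ U, ∀ i j : Fin 3, i ≠ j → 0 < cT α η i j f) :
    ∀ f ∈ U,
      (Matrix.of fun a b : Fin 3 =>
        -(Real.sqrt (1 + α b * Real.exp (2 * f b))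
          * fderiv ℝ (cGamma α η a) f (Pi.single b 1))).IsSymm ∧
      (Matrix.of fun a b : Fin 3 =>
        -(Real.sqrt (1 + α b * Real.exp (2 * f b))
          * fderiv ℝ (cGamma α η a) f (Pi.single b 1))).PosDef :=
  fun f hf => hyperbolic_conformal_convexity_general α η hη f (hα f hf) (hcosh f hf)
    (fun i j hij => (hx f hf i j hij).1) (hT f hf)
end
end

section
/- In a spherical conformal triangle datum, let A := γ₁ + γ₂ + γ₃ − π (the area of the spherical triangle). Then at every point of U and for each k ∈ {1,2,3} with {i,j,k} = {1,2,3}: ∂A/∂f_k = (1 − cos ℓ_ik)·∂γ_i/∂f_k + (1 − cos ℓ_jk)·∂γ_j/∂f_k. -/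
noncomputable section

/-- Partial derivative of `F` in the `k`-th coordinate direction at `x`. -/
def pd (k : Fin 3) (F : (Fin 3 → ℝ) → ℝ) (x : Fin 3 → ℝ) : ℝ :=
  fderiv ℝ F x (Pi.single k 1)

/-- The edge length `ℓ_ij = d_ij + d_ji` determined by the partial edge lengths. -/
def len (d : Fin 3 → Fin 3 → (Fin 3 → ℝ) → ℝ) (i j : Fin 3) (x : Fin 3 → ℝ) : ℝ :=
  d i j x + d j i x

/-- The angle `γ_i` of the spherical triangle with side lengths `ℓ_ab`, defined by the
spherical law of cosines
`cos γ_i = (cos ℓ_jk − cos ℓ_ij cos ℓ_ik)/(sin ℓ_ij sin ℓ_ik)`. -/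
def sGamma (d : Fin 3 → Fin 3 → (Fin 3 → ℝ) → ℝ) (i : Fin 3) (x : Fin 3 → ℝ) : ℝ :=
  Real.arccos ((Real.cos (len d (i+1) (i+2) x)
      - Real.cos (len d i (i+1) x) * Real.cos (len d i (i+2) x)) /
    (Real.sin (len d i (i+1) x) * Real.sin (len d i (i+2) x)))

/-- The height factor `T_ij = cos d_ij (tan d_ik − tan d_ij cos γ_i)/sin γ_i`
(geometrically `tan h_ij`). -/
def sT (d : Fin 3 → Fin 3 → (Fin 3 → ℝ) → ℝ) (i j : Fin 3) (x : Fin 3 → ℝ) : ℝ :=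
  Real.cos (d i j x) * (Real.tan (d i (other i j) x)
      - Real.tan (d i j x) * Real.cos (sGamma d i x)) / Real.sin (sGamma d i x)

/-!
Differentiating the spherical law of cosines `cos a = cos b cos c + sin b sin c cos α` gives
`sin b sin c sin α dα = sin a (da − cos γ db − cos β dc)`. Eliminating `da` and `db` from the three
such identities yields `dγ + cos b dα + cos a dβ = sin a sin β dc`, the differential of the polar
law of cosines. Varying `f_k` leaves the edge opposite to the vertex `k` fixed, so
`∂γ_k/∂f_k = −cos ℓ_ik ∂γ_i/∂f_k − cos ℓ_jk ∂γ_j/∂f_k`, and adding the derivatives of `γ_i` and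
`γ_j` gives the variation of the area.
-/

open Real Topology

/-- `a`, `b`, `c` are the side lengths of a nondegenerate spherical triangle. That each of them lies
in `(0, π)` follows from the four inequalities. -/
structure IsSphericalTriangle (a b c : ℝ) : Prop where
  lt_add₁ : a < b + c
  lt_add₂ : b < c + a
  lt_add₃ : c < a + b
  perimeter_lt : a + b + c < 2 * π

/-- The angle of a spherical triangle enclosed by the sides `b` and `c`, opposite to the side `a`.
With `α = sphericalAngle a b c`, the other two angles are written cyclically as
`β = sphericalAngle b c a` and `γ = sphericalAngle c a b`. -/
def sphericalAngle (a b c : ℝ) : ℝ :=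
  arccos ((cos a - cos b * cos c) / (sin b * sin c))

lemma sphericalAngle_comm (a b c : ℝ) : sphericalAngle a b c = sphericalAngle a c b := by
  simp only [sphericalAngle, mul_comm]

namespace IsSphericalTriangle

variable {a b c : ℝ}

lemma rotate (h : IsSphericalTriangle a b c) : IsSphericalTriangle b c a :=
  ⟨h.lt_add₂, h.lt_add₃, h.lt_add₁, by linarith [h.perimeter_lt]⟩

lemma reverse (h : IsSphericalTriangle a b c) : IsSphericalTriangle c b a :=
  ⟨by linarith [h.lt_add₃], by linarith [h.lt_add₂], by linarith [h.lt_add₁],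
    by linarith [h.perimeter_lt]⟩

lemma pos (h : IsSphericalTriangle a b c) : 0 < a := by linarith [h.lt_add₂, h.lt_add₃]

lemma lt_pi (h : IsSphericalTriangle a b c) : a < π := by linarith [h.lt_add₁, h.perimeter_lt]

lemma sin_pos (h : IsSphericalTriangle a b c) : 0 < sin a :=
  sin_pos_of_pos_of_lt_pi h.pos h.lt_pi

lemma cos_add_lt_cos (h : IsSphericalTriangle a b c) : cos (b + c) < cos a := by
  rcases le_total (b + c) π with hbc | hbc
  · exact cos_lt_cos_of_nonneg_of_le_pi h.pos.le hbc h.lt_add₁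
  · rw [← cos_two_pi_sub]
    exact cos_lt_cos_of_nonneg_of_le_pi h.pos.le (by linarith) (by linarith [h.perimeter_lt])

lemma cos_lt_cos_sub (h : IsSphericalTriangle a b c) : cos a < cos (b - c) := by
  rw [← cos_abs (b - c)]
  exact cos_lt_cos_of_nonneg_of_le_pi (abs_nonneg _) h.lt_pi.le
    (abs_lt.2 ⟨by linarith [h.lt_add₃], by linarith [h.lt_add₂]⟩)

lemma cos_angle_arg_mem_Ioo (h : IsSphericalTriangle a b c) :
    (cos a - cos b * cos c) / (sin b * sin c) ∈ Set.Ioo (-1) 1 := by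
  have hpos : 0 < sin b * sin c := mul_pos h.rotate.sin_pos h.rotate.rotate.sin_pos
  have hadd := h.cos_add_lt_cos
  have hsub := h.cos_lt_cos_sub
  rw [cos_add] at hadd
  rw [cos_sub] at hsub
  constructor
  · rw [lt_div_iff₀ hpos]
    linarith
  · rw [div_lt_one hpos]
    linarith

lemma cos_angle (h : IsSphericalTriangle a b c) :
    cos (sphericalAngle a b c) = (cos a - cos b * cos c) / (sin b * sin c) :=
  cos_arccos h.cos_angle_arg_mem_Ioo.1.le h.cos_angle_arg_mem_Ioo.2.le

lemma sin_angle_pos (h : IsSphericalTriangle a b c) : 0 < sin (sphericalAngle a b c) :=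
  sin_pos_of_pos_of_lt_pi (arccos_pos.2 h.cos_angle_arg_mem_Ioo.2)
    (arccos_lt_pi.2 h.cos_angle_arg_mem_Ioo.1)

theorem law_of_cosines (h : IsSphericalTriangle a b c) :
    cos a = cos b * cos c + sin b * sin c * cos (sphericalAngle a b c) := by
  have hb := h.rotate.sin_pos.ne'
  have hc := h.rotate.rotate.sin_pos.ne'
  rw [h.cos_angle]
  field_simp
  ring

theorem sin_mul_cos_angle (h : IsSphericalTriangle a b c) :
    sin a * cos (sphericalAngle b c a) =
      cos b * sin c - sin b * cos c * cos (sphericalAngle a b c) := by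
  apply mul_left_cancel₀ h.rotate.rotate.sin_pos.ne'
  linear_combination -h.rotate.law_of_cosines - cos c * h.law_of_cosines
    - cos b * sin_sq_add_cos_sq c

theorem sin_mul_cos_angle' (h : IsSphericalTriangle a b c) :
    sin c * cos (sphericalAngle b c a) =
      cos b * sin a - sin b * cos a * cos (sphericalAngle c a b) := by
  rw [sphericalAngle_comm b, sphericalAngle_comm c]
  exact h.reverse.sin_mul_cos_angle

theorem law_of_sines (h : IsSphericalTriangle a b c) :
    sin a * sin (sphericalAngle b c a) = sin b * sin (sphericalAngle a b c) := by
  rw [← sq_eq_sq₀ (mul_pos h.sin_pos h.rotate.sin_angle_pos).le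
    (mul_pos h.rotate.sin_pos h.sin_angle_pos).le]
  calc (sin a * sin (sphericalAngle b c a)) ^ 2
      = 1 - cos a ^ 2 - (sin a * cos (sphericalAngle b c a)) ^ 2 := by
        rw [mul_pow, mul_pow, sin_sq, sin_sq]
        ring
    _ = 1 - (cos b * cos c + sin b * sin c * cos (sphericalAngle a b c)) ^ 2
          - (cos b * sin c - sin b * cos c * cos (sphericalAngle a b c)) ^ 2 := by
        rw [h.sin_mul_cos_angle, ← h.law_of_cosines]
    _ = 1 - (cos b ^ 2 + sin b ^ 2 * cos (sphericalAngle a b c) ^ 2) := by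
        linear_combination
          -(cos b ^ 2 + sin b ^ 2 * cos (sphericalAngle a b c) ^ 2) * sin_sq_add_cos_sq c
    _ = (sin b * sin (sphericalAngle a b c)) ^ 2 := by
        rw [mul_pow, sin_sq (sphericalAngle a b c), cos_sq' b]
        ring

lemma sin_sub_cos_mul_sin_mul_cos_angle (h : IsSphericalTriangle a b c) :
    sin c - cos b * sin a * cos (sphericalAngle b c a)
        - cos a * sin b * cos (sphericalAngle a b c) =
      sin c * (sin a * sin (sphericalAngle b c a)) ^ 2 := by
  linear_combination -cos a * h.rotate.rotate.sin_mul_cos_angle' - sin c * sin_sq_add_cos_sq a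
    - sin a * cos (sphericalAngle b c a) * h.rotate.law_of_cosines
    - sin c * sin a ^ 2 * sin_sq_add_cos_sq (sphericalAngle b c a)

lemma eventually_nhds {X : Type*} [TopologicalSpace X] {a b c : X → ℝ} {x : X}
    (ha : ContinuousAt a x) (hb : ContinuousAt b x) (hc : ContinuousAt c x)
    (h : IsSphericalTriangle (a x) (b x) (c x)) :
    ∀ᶠ y in 𝓝 x, IsSphericalTriangle (a y) (b y) (c y) := by
  filter_upwards [ha.eventually_lt (hb.add hc) h.lt_add₁, hb.eventually_lt (hc.add ha) h.lt_add₂,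
    hc.eventually_lt (ha.add hb) h.lt_add₃,
    ((ha.add hb).add hc).eventually_lt continuousAt_const h.perimeter_lt] with y h₁ h₂ h₃ h₄
  exact ⟨h₁, h₂, h₃, h₄⟩

end IsSphericalTriangle

section Variation

variable {E : Type*} [NormedAddCommGroup E] [NormedSpace ℝ E] {a b c : E → ℝ} {x : E}

lemma differentiableAt_sphericalAngle (ha : DifferentiableAt ℝ a x) (hb : DifferentiableAt ℝ b x)
    (hc : DifferentiableAt ℝ c x) (h : IsSphericalTriangle (a x) (b x) (c x)) :
    DifferentiableAt ℝ (fun y ↦ sphericalAngle (a y) (b y) (c y)) x := by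
  have hden := (mul_pos h.rotate.sin_pos h.rotate.rotate.sin_pos).ne'
  have harg : DifferentiableAt ℝ
      (fun y ↦ (cos (a y) - cos (b y) * cos (c y)) / (sin (b y) * sin (c y))) x := by
    fun_prop (disch := exact hden)
  exact (differentiableAt_arccos.2
    ⟨h.cos_angle_arg_mem_Ioo.1.ne', h.cos_angle_arg_mem_Ioo.2.ne⟩).comp x harg

theorem sin_mul_sin_mul_sin_mul_fderiv_sphericalAngle (ha : DifferentiableAt ℝ a x)
    (hb : DifferentiableAt ℝ b x) (hc : DifferentiableAt ℝ c x)
    (h : IsSphericalTriangle (a x) (b x) (c x)) (v : E) :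
    sin (b x) * sin (c x) * sin (sphericalAngle (a x) (b x) (c x)) *
        fderiv ℝ (fun y ↦ sphericalAngle (a y) (b y) (c y)) x v =
      sin (a x) * (fderiv ℝ a x v - cos (sphericalAngle (c x) (a x) (b x)) * fderiv ℝ b x v -
        cos (sphericalAngle (b x) (c x) (a x)) * fderiv ℝ c x v) := by
  have hα := differentiableAt_sphericalAngle ha hb hc h
  have hlaw : (fun y ↦ cos (a y)) =ᶠ[𝓝 x] fun y ↦
      cos (b y) * cos (c y) + sin (b y) * sin (c y) * cos (sphericalAngle (a y) (b y) (c y)) :=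
    (h.eventually_nhds ha.continuousAt hb.continuousAt hc.continuousAt).mono
      fun _ hy ↦ hy.law_of_cosines
  have hrhs := (hb.hasFDerivAt.cos.fun_mul hc.hasFDerivAt.cos).fun_add
    ((hb.hasFDerivAt.sin.fun_mul hc.hasFDerivAt.sin).fun_mul hα.hasFDerivAt.cos)
  have hderiv := congrArg (· v)
    (ha.hasFDerivAt.cos.unique (hrhs.congr_of_eventuallyEq hlaw))
  simp only [add_apply, smul_apply, smul_eq_mul] at hderiv
  linear_combination hderiv + fderiv ℝ b x v * h.rotate.sin_mul_cos_angle'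
    + fderiv ℝ c x v * h.sin_mul_cos_angle

theorem fderiv_sphericalAngle_add_cos_mul (ha : DifferentiableAt ℝ a x)
    (hb : DifferentiableAt ℝ b x) (hc : DifferentiableAt ℝ c x)
    (h : IsSphericalTriangle (a x) (b x) (c x)) (v : E) :
    fderiv ℝ (fun y ↦ sphericalAngle (c y) (a y) (b y)) x v
        + cos (b x) * fderiv ℝ (fun y ↦ sphericalAngle (a y) (b y) (c y)) x v
        + cos (a x) * fderiv ℝ (fun y ↦ sphericalAngle (b y) (c y) (a y)) x v =
      sin (a x) * sin (sphericalAngle (b x) (c x) (a x)) * fderiv ℝ c x v := by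
  have hα := sin_mul_sin_mul_sin_mul_fderiv_sphericalAngle ha hb hc h v
  have hβ := sin_mul_sin_mul_sin_mul_fderiv_sphericalAngle hb hc ha h.rotate v
  have hγ := sin_mul_sin_mul_sin_mul_fderiv_sphericalAngle hc ha hb h.rotate.rotate v
  apply mul_left_cancel₀
    (mul_pos (mul_pos h.rotate.sin_pos h.rotate.rotate.sin_pos) h.sin_angle_pos).ne'
  -- The laws of sines identify the three factors `sin b sin c sin α`, `sin c sin a sin β` and
  -- `sin a sin b sin γ`; the five-part rules `sin_mul_cos_angle` cancel the `da` and `db` terms.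
  linear_combination hγ + cos (b x) * hα + cos (a x) * hβ
    + sin (b x) * fderiv ℝ (fun y ↦ sphericalAngle (c y) (a y) (b y)) x v
        * h.rotate.rotate.law_of_sines
    - cos (a x) * sin (c x) * fderiv ℝ (fun y ↦ sphericalAngle (b y) (c y) (a y)) x v
        * h.law_of_sines
    - fderiv ℝ a x v * h.sin_mul_cos_angle'
    - fderiv ℝ b x v * h.rotate.rotate.sin_mul_cos_angle
    + fderiv ℝ c x v * h.sin_sub_cos_mul_sin_mul_cos_angle
    + sin (c x) * sin (a x) * sin (sphericalAngle (b x) (c x) (a x)) * fderiv ℝ c x v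
        * h.law_of_sines

end Variation

section Indexed

variable {d : Fin 3 → Fin 3 → (Fin 3 → ℝ) → ℝ} {x : Fin 3 → ℝ} {i j k : Fin 3}

lemma sum_fin_three_of_ne {M : Type*} [AddCommMonoid M] (g : Fin 3 → M) (hij : i ≠ j) (hjk : j ≠ k)
    (hik : i ≠ k) : g 0 + g 1 + g 2 = g i + g j + g k := by
  have huniv : (Finset.univ : Finset (Fin 3)) = {i, j, k} := by decide +revert
  rw [← Fin.sum_univ_three, huniv, Finset.sum_insert (by simp [hij, hik]), Finset.sum_pair hjk,
    add_assoc]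

lemma eq_add_one_and_eq_add_two_or_of_ne : ∀ {i j k : Fin 3}, i ≠ j → j ≠ k → i ≠ k →
    j = i + 1 ∧ k = i + 2 ∨ j = i + 2 ∧ k = i + 1 := by
  decide

lemma len_comm (d : Fin 3 → Fin 3 → (Fin 3 → ℝ) → ℝ) (i j : Fin 3) (x : Fin 3 → ℝ) :
    len d i j x = len d j i x :=
  add_comm _ _

lemma sGamma_eq_sphericalAngle (hij : i ≠ j) (hjk : j ≠ k) (hik : i ≠ k) :
    sGamma d i = fun y ↦ sphericalAngle (len d j k y) (len d k i y) (len d i j y) := by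
  funext y
  rcases eq_add_one_and_eq_add_two_or_of_ne hij hjk hik with ⟨rfl, rfl⟩ | ⟨rfl, rfl⟩
  · rw [sphericalAngle_comm, len_comm d (i + 2) i]
    rfl
  · rw [len_comm d (i + 2), len_comm d (i + 1) i]
    rfl

lemma isSphericalTriangle_len
    (htri : ∀ i j k : Fin 3, i ≠ j → j ≠ k → i ≠ k → len d i j x < len d i k x + len d k j x)
    (hperim : len d 0 1 x + len d 1 2 x + len d 0 2 x < 2 * π)
    (hij : i ≠ j) (hjk : j ≠ k) (hik : i ≠ k) :
    IsSphericalTriangle (len d j k x) (len d k i x) (len d i j x) where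
  lt_add₁ := by linarith [htri j k i hjk hik.symm hij.symm, len_comm d i j x, len_comm d i k x]
  lt_add₂ := by linarith [htri k i j hik.symm hij hjk.symm, len_comm d k j x, len_comm d j i x]
  lt_add₃ := by linarith [htri i j k hij hjk hik, len_comm d i k x, len_comm d k j x]
  perimeter_lt := by
    have hopp : ∀ {i j k : Fin 3}, i ≠ j → j ≠ k → i ≠ k →
        len d (i + 1) (i + 2) x = len d j k x := by
      intro i j k hij hjk hik
      rcases eq_add_one_and_eq_add_two_or_of_ne hij hjk hik with ⟨rfl, rfl⟩ | ⟨rfl, rfl⟩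
      exacts [rfl, len_comm d _ _ x]
    have hsum := sum_fin_three_of_ne (fun m ↦ len d (m + 1) (m + 2) x) hij hjk hik
    rw [hopp hij hjk hik, hopp hjk hik.symm hij.symm, hopp hik.symm hij hjk.symm] at hsum
    calc len d j k x + len d k i x + len d i j x = len d 1 2 x + len d 2 0 x + len d 0 1 x :=
          hsum.symm
      _ < 2 * π := by linarith [len_comm d 2 0 x]

lemma pd_len (hij : DifferentiableAt ℝ (d i j) x) (hji : DifferentiableAt ℝ (d j i) x) :
    pd k (len d i j) x = pd k (d i j) x + pd k (d j i) x :=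
  congrArg (· (Pi.single k 1)) (fderiv_add hij hji)

lemma differentiableAt_sGamma (hℓ : ∀ i j, i ≠ j → DifferentiableAt ℝ (len d i j) x)
    (hij : i ≠ j) (hjk : j ≠ k) (hik : i ≠ k)
    (hT : IsSphericalTriangle (len d j k x) (len d k i x) (len d i j x)) :
    DifferentiableAt ℝ (sGamma d i) x := by
  rw [sGamma_eq_sphericalAngle hij hjk hik]
  exact differentiableAt_sphericalAngle (hℓ j k hjk) (hℓ k i hik.symm) (hℓ i j hij) hT

theorem pd_sGamma_add_cos_mul (hℓ : ∀ i j, i ≠ j → DifferentiableAt ℝ (len d i j) x)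
    (hij : i ≠ j) (hjk : j ≠ k) (hik : i ≠ k)
    (hT : IsSphericalTriangle (len d j k x) (len d k i x) (len d i j x))
    (hfixed : pd k (len d i j) x = 0) :
    pd k (sGamma d k) x + cos (len d i k x) * pd k (sGamma d i) x
      + cos (len d j k x) * pd k (sGamma d j) x = 0 := by
  have hpolar := fderiv_sphericalAngle_add_cos_mul (hℓ j k hjk) (hℓ k i hik.symm) (hℓ i j hij) hT
    (Pi.single k 1)
  rw [← sGamma_eq_sphericalAngle hij hjk hik, ← sGamma_eq_sphericalAngle hjk hik.symm hij.symm,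
    ← sGamma_eq_sphericalAngle hik.symm hij hjk.symm, len_comm d k i] at hpolar
  exact hpolar.trans (mul_eq_zero_of_right _ hfixed)

lemma pd_sGamma_sum (hγ : ∀ i, DifferentiableAt ℝ (sGamma d i) x)
    (hij : i ≠ j) (hjk : j ≠ k) (hik : i ≠ k) (l : Fin 3) :
    pd l (fun y ↦ sGamma d 0 y + sGamma d 1 y + sGamma d 2 y - π) x =
      pd l (sGamma d i) x + pd l (sGamma d j) x + pd l (sGamma d k) x := by
  have hsum := (((hγ 0).hasFDerivAt.fun_add (hγ 1).hasFDerivAt).fun_add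
    (hγ 2).hasFDerivAt).sub_const π
  rw [← sum_fin_three_of_ne (fun m ↦ pd l (sGamma d m) x) hij hjk hik]
  exact congrArg (· (Pi.single l 1)) hsum.fderiv

end Indexed

theorem spherical_area_variation_general
    {U : Set (Fin 3 → ℝ)} (hUopen : IsOpen U)
    {d : Fin 3 → Fin 3 → (Fin 3 → ℝ) → ℝ}
    (hdiff : ∀ i j : Fin 3, i ≠ j → DifferentiableOn ℝ (d i j) U)
    (hdep : ∀ i j k : Fin 3, i ≠ j → k ≠ i → k ≠ j → ∀ x ∈ U, pd k (d i j) x = 0)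
    (htri : ∀ i j k : Fin 3, i ≠ j → j ≠ k → i ≠ k → ∀ x ∈ U,
      len d i j x < len d i k x + len d k j x)
    (hperim : ∀ x ∈ U, len d 0 1 x + len d 1 2 x + len d 0 2 x < 2 * π) :
    ∀ x ∈ U, ∀ i j k : Fin 3, i ≠ j → j ≠ k → i ≠ k →
      pd k (fun y ↦ sGamma d 0 y + sGamma d 1 y + sGamma d 2 y - π) x
        = (1 - cos (len d i k x)) * pd k (sGamma d i) x
          + (1 - cos (len d j k x)) * pd k (sGamma d j) x := by
  intro x hx i j k hij hjk hik
  have hd (i j : Fin 3) (hij : i ≠ j) : DifferentiableAt ℝ (d i j) x :=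
    (hdiff i j hij).differentiableAt (hUopen.mem_nhds hx)
  have hℓ (i j : Fin 3) (hij : i ≠ j) : DifferentiableAt ℝ (len d i j) x :=
    (hd i j hij).add (hd j i hij.symm)
  have hT {i j k : Fin 3} (hij : i ≠ j) (hjk : j ≠ k) (hik : i ≠ k) :
      IsSphericalTriangle (len d j k x) (len d k i x) (len d i j x) :=
    isSphericalTriangle_len (fun i j k hij hjk hik ↦ htri i j k hij hjk hik x hx) (hperim x hx)
      hij hjk hik
  have hγ (i : Fin 3) : DifferentiableAt ℝ (sGamma d i) x := by
    obtain ⟨j, k, hij, hjk, hik⟩ : ∃ j k, i ≠ j ∧ j ≠ k ∧ i ≠ k := by decide +revert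
    exact differentiableAt_sGamma hℓ hij hjk hik (hT hij hjk hik)
  have hfixed : pd k (len d i j) x = 0 := by
    rw [pd_len (hd i j hij) (hd j i hij.symm), hdep i j k hij hik.symm hjk.symm x hx,
      hdep j i k hij.symm hjk.symm hik.symm x hx, add_zero]
  rw [pd_sGamma_sum hγ hij hjk hik]
  linear_combination pd_sGamma_add_cos_mul hℓ hij hjk hik (hT hij hjk hik) hfixed

/-- Proposition 7.3 (variation of spherical area `A = γ₁ + γ₂ + γ₃ − π`):
`∂A/∂f_k = (1 − cos ℓ_ik) ∂γ_i/∂f_k + (1 − cos ℓ_jk) ∂γ_j/∂f_k`. -/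
theorem spherical_area_variation
    (U : Set (Fin 3 → ℝ)) (hUopen : IsOpen U)
    (d : Fin 3 → Fin 3 → (Fin 3 → ℝ) → ℝ)
    (hsmooth : ∀ i j : Fin 3, i ≠ j → ContDiffOn ℝ (⊤ : ℕ∞) (d i j) U)
    (hrange : ∀ i j : Fin 3, i ≠ j → ∀ x ∈ U,
      d i j x ∈ Set.Ioo (-(Real.pi / 2)) (Real.pi / 2))
    (hdep : ∀ i j k : Fin 3, i ≠ j → k ≠ i → k ≠ j → ∀ x ∈ U, pd k (d i j) x = 0)
    (hlen : ∀ i j : Fin 3, i ≠ j → ∀ x ∈ U, 0 < len d i j x ∧ len d i j x < Real.pi)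
    (htri : ∀ i j k : Fin 3, i ≠ j → j ≠ k → i ≠ k → ∀ x ∈ U,
      len d i j x < len d i k x + len d k j x)
    (hperim : ∀ x ∈ U, len d 0 1 x + len d 1 2 x + len d 0 2 x < 2 * Real.pi)
    (hcompat : ∀ x ∈ U,
      Real.cos (d 0 1 x) * Real.cos (d 1 2 x) * Real.cos (d 2 0 x)
        = Real.cos (d 1 0 x) * Real.cos (d 2 1 x) * Real.cos (d 0 2 x))
    (hconf : ∀ i j : Fin 3, i ≠ j → ∀ x ∈ U, pd i (len d i j) x = Real.tan (d i j x))
    :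
    ∀ x ∈ U, ∀ i j k : Fin 3, i ≠ j → j ≠ k → i ≠ k →
      pd k (fun y => sGamma d 0 y + sGamma d 1 y + sGamma d 2 y - Real.pi) x
        = (1 - Real.cos (len d i k x)) * pd k (sGamma d i) x
          + (1 - Real.cos (len d j k x)) * pd k (sGamma d j) x :=
  spherical_area_variation_general hUopen
    (fun i j hij ↦ (hsmooth i j hij).differentiableOn (by simp)) hdep htri hperim
end
end
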